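/- Let r > 0 and let n be a positive integer such that (1+Cr)/√n ≤ 1 and 3Cr(1+Cr)/√n ≤ 1/2. Then for every v ∈ X_r there exists a unique u ∈ X_r such that √n·u − (1/p⁰)Q(u,u) = v in L¹(ℝ³). -/

import Mathlib

/-!
Since `Q⁻(u,u) = u · R(u)` with a collision frequency `R(u) ≥ 0`, the equation is equivalent to the
fixed-point equation `u = (v + Q⁺(u,u)/p⁰) / (√n + R(u)/p⁰)`. The bounds
`‖Q⁺(f,g)/p⁰‖ ≤ C ‖f‖ ‖g‖` and `|R(f)| ≤ C ‖f‖` show that the right-hand side maps `X_r` into itself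
(`phi_norm_le`, first condition on `n`) and is a `1/2`-contraction there (`phi_sub_le`, second
condition). As `X_r` is closed in `L¹`, Banach's fixed-point theorem applies.

The bound on `Q⁺` rests on the invariance of `dp̄ dq̄ / (p⁰q⁰)` under `(p̄,q̄) ↦ (p̄′,q̄′)` for fixed `ω`
(`map_collision`). This is proved without computing a Jacobian. On a pair of lines parallel to `ω̂`,
the collision is an elastic collision of two relativistic particles on a line whose masses `a`, `b`
are the energies of the transverse momenta. With momenta `a sinh θ` and `b sinh φ`, the measure
becomes `dθ dφ`. With `δ = φ - θ`, and `h(δ)` the rapidity of the centre of mass relative to the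
first particle (`cmRap`), the collision is `(θ, δ) ↦ (θ + 2h(δ), -δ)`, which preserves Lebesgue
measure.
-/

open MeasureTheory Real

noncomputable section

/-- Momentum space `ℝ³`. -/
abbrev E3 : Type := EuclideanSpace ℝ (Fin 3)

/-- The scalar product associated with the Bianchi type I metric coefficients `α = a(t)`,
`β = b(t)`: `p̄·q̄ = α²p¹q¹ + β²(p²q² + p³q³)`. -/
def mdot (α β : ℝ) (p q : E3) : ℝ :=
  α ^ 2 * p 0 * q 0 + β ^ 2 * (p 1 * q 1 + p 2 * q 2)

/-- `p⁰ = √(1 + |p̄|²)` where `|p̄|² = p̄·p̄`. -/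
def pZ (α β : ℝ) (p : E3) : ℝ := Real.sqrt (1 + mdot α β p p)

/-- `ω` normalized to unit length for the metric norm. -/
def omHat (α β : ℝ) (ω : E3) : E3 := (Real.sqrt (mdot α β ω ω))⁻¹ • ω

/-- The total energy `e = p⁰ + q⁰`. -/
def collE (α β : ℝ) (p q : E3) : ℝ := pZ α β p + pZ α β q

/-- The function `C(p̄, q̄, ω)` of Glassey's representation of post-collisional momenta. -/
def collC (α β : ℝ) (p q ω : E3) : ℝ :=
  2 * pZ α β p * pZ α β q * collE α β p q *
      mdot α β (omHat α β ω) ((pZ α β q)⁻¹ • q - (pZ α β p)⁻¹ • p) /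
    (collE α β p q ^ 2 - mdot α β (omHat α β ω) (p + q) ^ 2)

/-- The post-collisional momentum `p̄′ = p̄ + C(p̄,q̄,ω)ω̂`. -/
def pPr (α β : ℝ) (p q ω : E3) : E3 := p + collC α β p q ω • omHat α β ω

/-- The post-collisional momentum `q̄′ = q̄ − C(p̄,q̄,ω)ω̂`. -/
def qPr (α β : ℝ) (p q ω : E3) : E3 := q - collC α β p q ω • omHat α β ω

/-- The surface measure on the unit sphere `S² ⊂ ℝ³`. -/
def sphMeas : Measure (Metric.sphere (0 : E3) 1) := (volume : Measure E3).toSphere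

/-- The gain term `Q⁺(f,g)`. -/
def Qplus (α β : ℝ) (S₀ : E3 → E3 → E3 → E3 → ℝ) (f g : E3 → ℝ) (p : E3) : ℝ :=
  α * β ^ 2 *
    ∫ q : E3, (pZ α β q)⁻¹ *
      ∫ ω : Metric.sphere (0 : E3) 1,
        f (pPr α β p q ω) * g (qPr α β p q ω) *
          S₀ p q (pPr α β p q ω) (qPr α β p q ω) ∂sphMeas

/-- The loss term `Q⁻(f,g)`. -/
def Qminus (α β : ℝ) (S₀ : E3 → E3 → E3 → E3 → ℝ) (f g : E3 → ℝ) (p : E3) : ℝ :=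
  α * β ^ 2 *
    ∫ q : E3, (pZ α β q)⁻¹ *
      ∫ ω : Metric.sphere (0 : E3) 1,
        f p * g q * S₀ p q (pPr α β p q ω) (qPr α β p q ω) ∂sphMeas

/-- The collision operator `Q = Q⁺ − Q⁻`. -/
def Qcoll (α β : ℝ) (S₀ : E3 → E3 → E3 → E3 → ℝ) (f g : E3 → ℝ) (p : E3) : ℝ :=
  Qplus α β S₀ f g p - Qminus α β S₀ f g p

/-- The space `L¹(ℝ³)`. -/
abbrev L1 : Type := Lp ℝ 1 (volume : Measure E3)

/-- Membership in `X_r = {f ∈ L¹(ℝ³) : f ≥ 0 a.e., ‖f‖ ≤ r}`. -/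
def memX (r : ℝ) (f : L1) : Prop := (0 ≤ᵐ[volume] ⇑f) ∧ ‖f‖ ≤ r

end

/-! ### Relativistic collisions on a line -/

section Rapidity

/-- The substitution `s = a sinh θ` turns `ds / √(a² + s²)` into `dθ`. -/
lemma lintegral_rapidity (a : ℝ) (ha : 0 < a) (g : ℝ → ENNReal) :
    ∫⁻ s, ENNReal.ofReal (√(a ^ 2 + s ^ 2))⁻¹ * g s = ∫⁻ θ, g (a * sinh θ) := by
  have himg : (fun θ : ℝ => a * sinh θ) '' Set.univ = Set.univ := by
    rw [Set.image_univ, Set.range_eq_univ]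
    intro y
    exact ⟨arsinh (y / a), by simp [sinh_arsinh]; field_simp⟩
  have hinj : Set.InjOn (fun θ : ℝ => a * sinh θ) Set.univ := by
    intro x _ y _ h
    exact sinh_injective (mul_left_cancel₀ ha.ne' h)
  have hder : ∀ x ∈ (Set.univ : Set ℝ),
      HasDerivWithinAt (fun θ : ℝ => a * sinh θ) (a * cosh x) Set.univ x := fun x _ =>
    ((hasDerivAt_sinh x).const_mul a).hasDerivWithinAt
  have h := lintegral_image_eq_lintegral_abs_deriv_mul MeasurableSet.univ hder hinj
    (fun s => ENNReal.ofReal (√(a ^ 2 + s ^ 2))⁻¹ * g s)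
  rw [himg, Measure.restrict_univ] at h
  rw [h]
  refine lintegral_congr fun θ => ?_
  have hs : √(a ^ 2 + (a * sinh θ) ^ 2) = a * cosh θ := by
    rw [show a ^ 2 + (a * sinh θ) ^ 2 = (a * cosh θ) ^ 2 by rw [mul_pow, mul_pow, cosh_sq]; ring]
    exact sqrt_sq (mul_pos ha (cosh_pos θ)).le
  have hp : 0 < a * cosh θ := mul_pos ha (cosh_pos θ)
  simp only [hs, abs_of_pos hp]
  rw [← mul_assoc, ← ENNReal.ofReal_mul hp.le, mul_inv_cancel₀ hp.ne', ENNReal.ofReal_one, one_mul]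

/-- The rapidity of the centre-of-mass frame relative to the first particle, for two particles on a
line with masses `a`, `b` and relative rapidity `δ`. -/
noncomputable def cmRap (a b δ : ℝ) : ℝ :=
  arsinh (b * sinh δ / √(a ^ 2 + b ^ 2 + 2 * a * b * cosh δ))

lemma measurable_cmRap (a b : ℝ) : Measurable (cmRap a b) := by
  unfold cmRap
  have h1 : Measurable sinh := continuous_sinh.measurable
  have h2 : Measurable cosh := continuous_cosh.measurable
  have h3 : Measurable arsinh := continuous_arsinh.measurable
  exact h3.comp (by fun_prop)

lemma cmRap_sinh_cosh {a b : ℝ} (ha : 0 < a) (hb : 0 < b) (δ : ℝ) :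
    sinh (2 * cmRap a b δ) =
        2 * (a + b * cosh δ) * (b * sinh δ) / (a ^ 2 + b ^ 2 + 2 * a * b * cosh δ) ∧
      cosh (2 * cmRap a b δ) =
        ((a + b * cosh δ) ^ 2 + (b * sinh δ) ^ 2) / (a ^ 2 + b ^ 2 + 2 * a * b * cosh δ) := by
  have hc : 0 < cosh δ := cosh_pos δ
  have hM : 0 < a ^ 2 + b ^ 2 + 2 * a * b * cosh δ := by positivity
  have hsq := sq_sqrt hM.le
  have hMp := sqrt_pos.mpr hM
  have hsh : sinh (cmRap a b δ) = b * sinh δ / √(a ^ 2 + b ^ 2 + 2 * a * b * cosh δ) :=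
    sinh_arsinh _
  have hch : cosh (cmRap a b δ) = (a + b * cosh δ) / √(a ^ 2 + b ^ 2 + 2 * a * b * cosh δ) := by
    have h1 : cosh (cmRap a b δ) ^ 2
        = ((a + b * cosh δ) / √(a ^ 2 + b ^ 2 + 2 * a * b * cosh δ)) ^ 2 := by
      rw [cosh_sq, hsh, div_pow, div_pow, hsq, div_add_one hM.ne']
      congr 1
      linear_combination (-b ^ 2) * cosh_sq δ
    exact (pow_left_inj₀ (cosh_pos _).le (by positivity) two_ne_zero).mp h1
  rw [sinh_two_mul, cosh_two_mul, hsh, hch]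
  constructor
  · rw [← hsq]
    field_simp
    simp
  · rw [div_pow, div_pow, hsq, add_div]

/-- The momentum exchanged in an elastic collision of two relativistic particles on a line, with
momenta `s`, `t` and energies `P`, `Q`. -/
noncomputable def lineC (P Q s t : ℝ) : ℝ :=
  2 * P * Q * (P + Q) * (t / Q - s / P) / ((P + Q) ^ 2 - (s + t) ^ 2)

/-- In rapidities, a collision shifts `θ` by an amount depending only on `δ = φ - θ`, and reverses
`δ`. -/
lemma lineC_rapidity {a b : ℝ} (ha : 0 < a) (hb : 0 < b) (θ δ : ℝ) :
    a * sinh θ + lineC (a * cosh θ) (b * cosh (θ + δ)) (a * sinh θ) (b * sinh (θ + δ))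
        = a * sinh (θ + 2 * cmRap a b δ) ∧
      b * sinh (θ + δ) - lineC (a * cosh θ) (b * cosh (θ + δ)) (a * sinh θ) (b * sinh (θ + δ))
        = b * sinh (θ + 2 * cmRap a b δ - δ) := by
  obtain ⟨h1, h2⟩ := cmRap_sinh_cosh ha hb δ
  have hc : 0 < cosh δ := cosh_pos δ
  have hM : 0 < a ^ 2 + b ^ 2 + 2 * a * b * cosh δ := by positivity
  have hθ := cosh_sq θ
  have hδ := cosh_sq δ
  have hP : 0 < cosh θ := cosh_pos θ
  have hQ : 0 < cosh (θ + δ) := cosh_pos _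
  have hC : lineC (a * cosh θ) (b * cosh (θ + δ)) (a * sinh θ) (b * sinh (θ + δ))
      = 2 * (a * cosh θ + b * cosh (θ + δ)) * (a * b * sinh δ)
        / (a ^ 2 + b ^ 2 + 2 * a * b * cosh δ) := by
    unfold lineC
    congr 1
    · field_simp
      rw [cosh_add, sinh_add]
      linear_combination sinh δ * hθ
    · rw [cosh_add, sinh_add]
      linear_combination (a ^ 2 + 2 * a * b * cosh δ + b ^ 2 * cosh δ ^ 2 - b ^ 2 * sinh δ ^ 2) * hθ
        + b ^ 2 * hδ
  rw [hC]
  constructor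
  · rw [sinh_add θ (2 * _), h1, h2, cosh_add]
    field_simp
    linear_combination (-b^2 * sinh θ) * hδ
  · rw [sinh_sub, sinh_add θ (2 * _), cosh_add θ (2 * _), h1, h2, cosh_add, sinh_add]
    field_simp
    linear_combination (-b ^ 2 * (sinh θ * cosh δ + cosh θ * sinh δ)) * hδ

/-- The collision on a line preserves `ds dt / (√(a² + s²) √(b² + t²))`. In the coordinates
`(θ, δ)` the measure is `dθ dδ`, and the collision is a shear followed by `δ ↦ -δ`. -/
lemma lintegral_line_collision {a b : ℝ} (ha : 0 < a) (hb : 0 < b) (G : ℝ × ℝ → ENNReal)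
    (hG : Measurable G) :
    ∫⁻ s, ∫⁻ t, ENNReal.ofReal (√(a ^ 2 + s ^ 2))⁻¹ * (ENNReal.ofReal (√(b ^ 2 + t ^ 2))⁻¹ *
        G (s + lineC √(a ^ 2 + s ^ 2) √(b ^ 2 + t ^ 2) s t,
           t - lineC √(a ^ 2 + s ^ 2) √(b ^ 2 + t ^ 2) s t)) =
      ∫⁻ s, ∫⁻ t, ENNReal.ofReal (√(a ^ 2 + s ^ 2))⁻¹ * (ENNReal.ofReal (√(b ^ 2 + t ^ 2))⁻¹ *
        G (s, t)) := by
  have key : ∀ {a : ℝ}, 0 < a → ∀ θ, √(a ^ 2 + (a * sinh θ) ^ 2) = a * cosh θ := by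
    intro a ha θ
    rw [show a ^ 2 + (a * sinh θ) ^ 2 = (a * cosh θ) ^ 2 by rw [mul_pow, mul_pow, cosh_sq]; ring]
    exact sqrt_sq (mul_pos ha (cosh_pos θ)).le
  have conv : ∀ H : ℝ → ℝ → ENNReal,
      ∫⁻ s, ∫⁻ t, ENNReal.ofReal (√(a ^ 2 + s ^ 2))⁻¹ *
        (ENNReal.ofReal (√(b ^ 2 + t ^ 2))⁻¹ * H s t) =
      ∫⁻ θ, ∫⁻ φ, H (a * sinh θ) (b * sinh φ) := by
    intro H
    simp_rw [lintegral_const_mul' _ _ ENNReal.ofReal_ne_top]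
    rw [lintegral_rapidity a ha]
    exact lintegral_congr fun θ => lintegral_rapidity b hb _
  rw [conv (fun s t => G (s + lineC √(a ^ 2 + s ^ 2) √(b ^ 2 + t ^ 2) s t,
           t - lineC √(a ^ 2 + s ^ 2) √(b ^ 2 + t ^ 2) s t)), conv (fun s t => G (s, t))]
  have m1 : Measurable sinh := continuous_sinh.measurable
  have m2 := measurable_cmRap a b
  calc _ = ∫⁻ θ, ∫⁻ δ, G (a * sinh (θ + 2 * cmRap a b δ), b * sinh (θ + 2 * cmRap a b δ - δ)) := by
        refine lintegral_congr fun θ => ?_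
        rw [← lintegral_add_left_eq_self _ θ]
        refine lintegral_congr fun δ => ?_
        simp only [key ha, key hb, (lineC_rapidity ha hb θ δ).1, (lineC_rapidity ha hb θ δ).2]
    _ = ∫⁻ δ, ∫⁻ θ, G (a * sinh (θ + 2 * cmRap a b δ), b * sinh (θ + 2 * cmRap a b δ - δ)) :=
        lintegral_lintegral_swap (Measurable.aemeasurable (by unfold Function.uncurry; fun_prop))
    _ = ∫⁻ δ, ∫⁻ θ, G (a * sinh θ, b * sinh (θ - δ)) := by
        refine lintegral_congr fun δ => ?_
        exact lintegral_add_right_eq_self (fun θ => G (a * sinh θ, b * sinh (θ - δ))) _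
    _ = ∫⁻ θ, ∫⁻ δ, G (a * sinh θ, b * sinh (θ - δ)) :=
        lintegral_lintegral_swap (Measurable.aemeasurable (by unfold Function.uncurry; fun_prop))
    _ = _ := by
        refine lintegral_congr fun θ => ?_
        exact lintegral_sub_left_eq_self (fun φ => G (a * sinh θ, b * sinh φ)) θ

end Rapidity

/-! ### Invariance of the phase-space measure -/

section Geometry

variable {α β : ℝ}

lemma mdot_self_nonneg (p : E3) : 0 ≤ mdot α β p p := by
  have : mdot α β p p = α ^ 2 * p 0 ^ 2 + β ^ 2 * (p 1 ^ 2 + p 2 ^ 2) := by unfold mdot; ring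
  rw [this]; positivity

lemma one_le_pZ (p : E3) : 1 ≤ pZ α β p := by
  unfold pZ
  rw [Real.one_le_sqrt]
  linarith [mdot_self_nonneg (α := α) (β := β) p]

lemma pZ_pos (p : E3) : 0 < pZ α β p := lt_of_lt_of_le one_pos (one_le_pZ p)

lemma pZ_inv_le_one (p : E3) : (pZ α β p)⁻¹ ≤ 1 := inv_le_one_of_one_le₀ (one_le_pZ p)

lemma mdot_self_omHat (hα : 0 < α) (hβ : 0 < β) (ω : Metric.sphere (0 : E3) 1) :
    mdot α β (omHat α β ω) (omHat α β ω) = 1 := by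
  have hn : ‖(ω : E3)‖ = 1 := by simp
  have h2 : (ω : E3) 0 ^ 2 + (ω : E3) 1 ^ 2 + (ω : E3) 2 ^ 2 = 1 := by
    have := EuclideanSpace.norm_sq_eq (ω : E3)
    rw [hn, Fin.sum_univ_three] at this
    simpa using this.symm
  have hpos : 0 < mdot α β (ω : E3) ω := by
    have e : mdot α β (ω : E3) ω
        = α ^ 2 * (ω : E3) 0 ^ 2 + β ^ 2 * ((ω : E3) 1 ^ 2 + (ω : E3) 2 ^ 2) := by
      unfold mdot; ring
    rw [e]
    by_cases h : (ω : E3) 0 = 0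
    · have : (ω : E3) 1 ^ 2 + (ω : E3) 2 ^ 2 = 1 := by
        rw [h] at h2; linarith
      rw [this, h]; positivity
    · positivity
  have e : mdot α β (omHat α β ω) (omHat α β ω)
      = (√(mdot α β (ω : E3) ω))⁻¹ ^ 2 * mdot α β (ω : E3) ω := by
    simp only [omHat, mdot, PiLp.smul_apply, smul_eq_mul]; ring
  rw [e, inv_pow, sq_sqrt hpos.le, inv_mul_cancel₀ hpos.ne']

lemma measurable_mdot {X : Type*} [MeasurableSpace X] {f g : X → E3} (hf : Measurable f)
    (hg : Measurable g) : Measurable fun x => mdot α β (f x) (g x) := by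
  unfold mdot; fun_prop

lemma measurable_pZ {X : Type*} [MeasurableSpace X] {f : X → E3} (hf : Measurable f) :
    Measurable fun x => pZ α β (f x) := by
  unfold pZ
  exact (measurable_const.add (measurable_mdot hf hf)).sqrt

lemma measurable_omHat {X : Type*} [MeasurableSpace X] {f : X → E3} (hf : Measurable f) :
    Measurable fun x => omHat α β (f x) := by
  unfold omHat
  exact (measurable_mdot hf hf).sqrt.inv.smul hf

lemma measurable_collC {X : Type*} [MeasurableSpace X] {f g h : X → E3} (hf : Measurable f)
    (hg : Measurable g) (hh : Measurable h) : Measurable fun x => collC α β (f x) (g x) (h x) := by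
  unfold collC collE
  have h1 := measurable_pZ (α := α) (β := β) hf
  have h2 := measurable_pZ (α := α) (β := β) hg
  have h3 := measurable_mdot (α := α) (β := β) (measurable_omHat (α := α) (β := β) hh) (hf.add hg)
  have h4 := measurable_mdot (α := α) (β := β) (measurable_omHat (α := α) (β := β) hh)
    ((h2.inv.smul hg).sub (h1.inv.smul hf))
  exact ((((h1.const_mul 2).mul h2).mul (h1.add h2)).mul h4).div
    (((h1.add h2).pow_const 2).sub (h3.pow_const 2))

lemma measurable_pPr {X : Type*} [MeasurableSpace X] {f g h : X → E3} (hf : Measurable f)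
    (hg : Measurable g) (hh : Measurable h) : Measurable fun x => pPr α β (f x) (g x) (h x) := by
  unfold pPr
  exact hf.add ((measurable_collC hf hg hh).smul (measurable_omHat hh))

lemma measurable_qPr {X : Type*} [MeasurableSpace X] {f g h : X → E3} (hf : Measurable f)
    (hg : Measurable g) (hh : Measurable h) : Measurable fun x => qPr α β (f x) (g x) (h x) := by
  unfold qPr
  exact hg.sub ((measurable_collC hf hg hh).smul (measurable_omHat hh))

/-- The component of `x` orthogonal to the unit vector `w` for the metric scalar product. -/
noncomputable def perp (α β : ℝ) (w x : E3) : E3 := x - mdot α β w x • w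

lemma measurable_perp (w : E3) : Measurable (perp α β w) := by
  unfold perp
  exact measurable_id.sub ((measurable_mdot measurable_const measurable_id).smul measurable_const)

lemma mdot_perp {w : E3} (hw : mdot α β w w = 1) (x : E3) : mdot α β w (perp α β w x) = 0 := by
  have : mdot α β w (perp α β w x) = mdot α β w x - mdot α β w x * mdot α β w w := by
    simp only [perp, mdot, PiLp.smul_apply, PiLp.sub_apply, smul_eq_mul]; ring
  rw [this, hw]; ring

lemma mdot_add_smul {w x : E3} (hw : mdot α β w w = 1) (hx : mdot α β w x = 0) (s : ℝ) :
    mdot α β w (x + s • w) = s := by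
  have : mdot α β w (x + s • w) = mdot α β w x + s * mdot α β w w := by
    simp only [mdot, PiLp.smul_apply, PiLp.add_apply, smul_eq_mul]; ring
  rw [this, hw, hx]; ring

lemma pZ_add_smul {w x : E3} (hw : mdot α β w w = 1) (hx : mdot α β w x = 0) (s : ℝ) :
    pZ α β (x + s • w) = √(pZ α β x ^ 2 + s ^ 2) := by
  have : mdot α β (x + s • w) (x + s • w)
      = mdot α β x x + 2 * s * mdot α β w x + s ^ 2 * mdot α β w w := by
    simp only [mdot, PiLp.smul_apply, PiLp.add_apply, smul_eq_mul]; ring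
  have h0 := mdot_self_nonneg (α := α) (β := β) x
  rw [pZ, this, hw, hx, pZ, sq_sqrt (by linarith)]
  congr 1; ring

/-- Along lines in the direction `ω̂`, the collision acts as a one-dimensional collision of
particles whose masses are the transverse energies. -/
lemma collC_add_smul {ω x y : E3} (hw : mdot α β (omHat α β ω) (omHat α β ω) = 1)
    (hx : mdot α β (omHat α β ω) x = 0) (hy : mdot α β (omHat α β ω) y = 0) (s t : ℝ) :
    collC α β (x + s • omHat α β ω) (y + t • omHat α β ω) ω =
      lineC √(pZ α β x ^ 2 + s ^ 2) √(pZ α β y ^ 2 + t ^ 2) s t := by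
  have hadd : ∀ w u v : E3, mdot α β w (u + v) = mdot α β w u + mdot α β w v := by
    intro w u v; simp only [mdot, PiLp.add_apply]; ring
  have hsub : ∀ (c d : ℝ) (w u v : E3),
      mdot α β w (c • u - d • v) = c * mdot α β w u - d * mdot α β w v := by
    intro c d w u v; simp only [mdot, PiLp.sub_apply, PiLp.smul_apply, smul_eq_mul]; ring
  unfold collC collE lineC
  rw [hadd, hsub, mdot_add_smul hw hx, mdot_add_smul hw hy, pZ_add_smul hw hx, pZ_add_smul hw hy]
  simp only [div_eq_inv_mul]

/-- Integration over `ℝ³` as an average of integrals over the lines parallel to `w`; each line is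
weighted through the slab `0 < w·x ≤ 1`, which it meets in a segment of length `1`. -/
lemma lintegral_lines {w : E3} (hw : mdot α β w w = 1) (F : E3 → ENNReal) (hF : Measurable F) :
    ∫⁻ p, F p = ∫⁻ x, (Set.Ioc (0 : ℝ) 1).indicator 1 (mdot α β w x) *
      ∫⁻ s : ℝ, F (perp α β w x + s • w) := by
  have hk : Measurable ((Set.Ioc (0 : ℝ) 1).indicator (1 : ℝ → ENNReal)) :=
    measurable_one.indicator measurableSet_Ioc
  have hl : ∀ (x : E3) (s : ℝ), mdot α β w (x - s • w) = mdot α β w x - s := by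
    intro x s
    have : mdot α β w (x - s • w) = mdot α β w x - s * mdot α β w w := by
      simp only [mdot, PiLp.smul_apply, PiLp.sub_apply, smul_eq_mul]; ring
    rw [this, hw, mul_one]
  have hm : Measurable (fun x => mdot α β w x) := measurable_mdot measurable_const measurable_id
  symm
  calc _ = ∫⁻ x, ∫⁻ s : ℝ, (Set.Ioc (0 : ℝ) 1).indicator 1 (mdot α β w x) * F (x + s • w) := by
        refine lintegral_congr fun x => ?_
        rw [← lintegral_const_mul _ (by fun_prop),
          ← lintegral_add_right_eq_self _ (mdot α β w x)]
        refine lintegral_congr fun s => ?_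
        congr 2
        simp only [perp, add_smul]; abel
    _ = ∫⁻ s : ℝ, ∫⁻ x, (Set.Ioc (0 : ℝ) 1).indicator 1 (mdot α β w x) * F (x + s • w) := by
        refine lintegral_lintegral_swap (Measurable.aemeasurable ?_)
        unfold Function.uncurry
        exact (hk.comp (hm.comp measurable_fst)).mul (by fun_prop)
    _ = ∫⁻ s : ℝ, ∫⁻ x, (Set.Ioc (0 : ℝ) 1).indicator 1 (mdot α β w x - s) * F x := by
        refine lintegral_congr fun s => ?_
        rw [← lintegral_sub_right_eq_self _ (s • w)]
        refine lintegral_congr fun x => ?_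
        rw [hl, sub_add_cancel]
    _ = ∫⁻ x, ∫⁻ s : ℝ, (Set.Ioc (0 : ℝ) 1).indicator 1 (mdot α β w x - s) * F x := by
        refine lintegral_lintegral_swap (Measurable.aemeasurable ?_)
        unfold Function.uncurry
        exact (hk.comp ((hm.comp measurable_snd).sub measurable_fst)).mul (hF.comp measurable_snd)
    _ = ∫⁻ x, F x := by
        refine lintegral_congr fun x => ?_
        rw [lintegral_mul_const (F x) (f := fun s => (Set.Ioc (0 : ℝ) 1).indicator 1 (mdot α β w x - s))
            (hk.comp (by fun_prop)),
          lintegral_sub_left_eq_self (fun s => (Set.Ioc (0 : ℝ) 1).indicator 1 s) (mdot α β w x),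
          lintegral_indicator_one measurableSet_Ioc]
        simp

lemma lintegral_lines_two {w : E3} (hw : mdot α β w w = 1) (F : E3 × E3 → ENNReal)
    (hF : Measurable F) :
    ∫⁻ p, ∫⁻ q, F (p, q) = ∫⁻ x, (Set.Ioc (0 : ℝ) 1).indicator 1 (mdot α β w x) *
      ∫⁻ y, (Set.Ioc (0 : ℝ) 1).indicator 1 (mdot α β w y) *
        ∫⁻ s : ℝ, ∫⁻ t : ℝ, F (perp α β w x + s • w, perp α β w y + t • w) := by
  have hk : Measurable ((Set.Ioc (0 : ℝ) 1).indicator (1 : ℝ → ENNReal)) :=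
    measurable_one.indicator measurableSet_Ioc
  have hm : Measurable (fun x => mdot α β w x) := measurable_mdot measurable_const measurable_id
  have hpm := measurable_perp (α := α) (β := β) w
  rw [lintegral_lines hw _ hF.lintegral_prod_right']
  refine lintegral_congr fun x => ?_
  congr 1
  calc _ = ∫⁻ s : ℝ, ∫⁻ y, (Set.Ioc (0 : ℝ) 1).indicator 1 (mdot α β w y) *
        ∫⁻ t : ℝ, F (perp α β w x + s • w, perp α β w y + t • w) :=
        lintegral_congr fun s => lintegral_lines hw _ (by fun_prop)
    _ = ∫⁻ y, ∫⁻ s : ℝ, (Set.Ioc (0 : ℝ) 1).indicator 1 (mdot α β w y) *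
        ∫⁻ t : ℝ, F (perp α β w x + s • w, perp α β w y + t • w) := by
        refine lintegral_lintegral_swap (Measurable.aemeasurable ?_)
        unfold Function.uncurry
        refine (hk.comp (hm.comp measurable_snd)).mul ?_
        refine Measurable.lintegral_prod_right' (f := fun z : (ℝ × E3) × ℝ =>
          F (perp α β w x + z.1.1 • w, perp α β w z.1.2 + z.2 • w)) ?_
        fun_prop
    _ = _ := by
        refine lintegral_congr fun y => ?_
        refine lintegral_const_mul _ ?_
        refine Measurable.lintegral_prod_right' (f := fun z : ℝ × ℝ =>
          F (perp α β w x + z.1 • w, perp α β w y + z.2 • w)) ?_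
        fun_prop

/-- The measure `dp̄ / p⁰`. -/
noncomputable def mass (α β : ℝ) : Measure E3 :=
  volume.withDensity fun p => ((Real.toNNReal (pZ α β p)⁻¹ : NNReal) : ENNReal)

lemma measurable_dens : Measurable fun p : E3 => Real.toNNReal (pZ α β p)⁻¹ :=
  (measurable_pZ measurable_id).inv.real_toNNReal

instance : SFinite (mass α β) := by unfold mass; infer_instance

lemma lintegral_mass_two (F : E3 × E3 → ENNReal) (hF : Measurable F) :
    ∫⁻ z, F z ∂((mass α β).prod (mass α β)) =
      ∫⁻ p, ∫⁻ q, ENNReal.ofReal (pZ α β p)⁻¹ * (ENNReal.ofReal (pZ α β q)⁻¹ * F (p, q)) := by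
  rw [lintegral_prod _ hF.aemeasurable]
  have hd := (measurable_dens (α := α) (β := β)).coe_nnreal_ennreal
  have h1 : ∀ p : E3, ∫⁻ q, F (p, q) ∂(mass α β) =
      ∫⁻ q, ENNReal.ofReal (pZ α β q)⁻¹ * F (p, q) := by
    intro p
    unfold mass
    rw [lintegral_withDensity_eq_lintegral_mul _ hd (by fun_prop)]
    rfl
  simp_rw [lintegral_const_mul' _ _ ENNReal.ofReal_ne_top, ← h1]
  nth_rw 1 [mass]
  rw [lintegral_withDensity_eq_lintegral_mul _ hd hF.lintegral_prod_right']
  rfl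

/-- For a fixed collision direction, the collision map preserves `dp̄ dq̄ / (p⁰q⁰)`. -/
lemma map_collision (hα : 0 < α) (hβ : 0 < β) (ω : Metric.sphere (0 : E3) 1) :
    Measure.map (fun z : E3 × E3 => (pPr α β z.1 z.2 ω, qPr α β z.1 z.2 ω))
      ((mass α β).prod (mass α β)) = (mass α β).prod (mass α β) := by
  have hT : Measurable fun z : E3 × E3 => (pPr α β z.1 z.2 ω, qPr α β z.1 z.2 ω) :=
    (measurable_pPr measurable_fst measurable_snd measurable_const).prodMk
      (measurable_qPr measurable_fst measurable_snd measurable_const)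
  have hw := mdot_self_omHat hα hβ ω
  refine Measure.ext_of_lintegral _ fun F hF => ?_
  have hd : Measurable fun p : E3 => ENNReal.ofReal (pZ α β p)⁻¹ :=
    (measurable_pZ measurable_id).inv.ennreal_ofReal
  rw [lintegral_map hF hT, lintegral_mass_two (fun z => F (pPr α β z.1 z.2 ω, qPr α β z.1 z.2 ω)) (hF.comp hT), lintegral_mass_two _ hF,
    lintegral_lines_two hw (fun z => ENNReal.ofReal (pZ α β z.1)⁻¹ *
      (ENNReal.ofReal (pZ α β z.2)⁻¹ * F (pPr α β z.1 z.2 ω, qPr α β z.1 z.2 ω)))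
      ((hd.comp measurable_fst).mul ((hd.comp measurable_snd).mul (hF.comp hT))),
    lintegral_lines_two hw (fun z => ENNReal.ofReal (pZ α β z.1)⁻¹ *
      (ENNReal.ofReal (pZ α β z.2)⁻¹ * F (z.1, z.2)))
      ((hd.comp measurable_fst).mul ((hd.comp measurable_snd).mul hF))]
  refine lintegral_congr fun x => ?_
  congr 1
  refine lintegral_congr fun y => ?_
  congr 1
  have hx := mdot_perp hw x
  have hy := mdot_perp hw y
  have hcol := collC_add_smul hw hx hy
  set w := omHat α β ω with hwdef
  have hline := lintegral_line_collision (pZ_pos (α := α) (β := β) (perp α β w x))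
    (pZ_pos (α := α) (β := β) (perp α β w y))
    (fun z => F (perp α β w x + z.1 • w, perp α β w y + z.2 • w)) (by fun_prop)
  simp only [pPr, qPr, pZ_add_smul hw hx, pZ_add_smul hw hy, hcol, ← hwdef]
  simpa only [add_smul, sub_smul, add_assoc, add_sub_assoc] using hline

end Geometry

/-! ### Bounds on the gain and loss terms -/

section Estimates

/-- The standing assumptions on the metric coefficients and on the collision kernel. -/
structure KernelHyp (α β C₁ : ℝ) (S₀ : E3 → E3 → E3 → E3 → ℝ) : Prop where
  hα : 0 < α
  hβ : 0 < β
  hC₁ : 0 < C₁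
  meas : Measurable fun x : (E3 × E3) × E3 × E3 => S₀ x.1.1 x.1.2 x.2.1 x.2.2
  nonneg : ∀ p q p' q', 0 ≤ S₀ p q p' q'
  bdd : ∀ p q p' q', S₀ p q p' q' ≤ C₁

variable {α β C₁ : ℝ} {S₀ : E3 → E3 → E3 → E3 → ℝ}

instance : IsFiniteMeasure sphMeas := by unfold sphMeas; infer_instance

lemma sphMeas_real_univ : sphMeas.real Set.univ = 4 * π := by
  unfold sphMeas
  rw [Measure.toSphere_real_apply_univ, measureReal_def, EuclideanSpace.volume_ball_fin_three]
  rw [ENNReal.toReal_mul, ENNReal.toReal_ofReal (by positivity)]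
  simp
  ring

lemma mass_le_volume : mass α β ≤ volume := by
  unfold mass
  calc _ ≤ (volume : Measure E3).withDensity 1 := by
        refine withDensity_mono (Filter.Eventually.of_forall fun p => ?_)
        simpa using pZ_inv_le_one p
    _ = volume := withDensity_one

lemma integral_mass (f : E3 → ℝ) : ∫ p, f p ∂(mass α β) = ∫ p, (pZ α β p)⁻¹ * f p := by
  unfold mass
  rw [integral_withDensity_eq_integral_smul measurable_dens]
  refine integral_congr_ae (Filter.Eventually.of_forall fun p => ?_)
  simp [NNReal.smul_def, (pZ_pos (α := α) (β := β) p).le]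

lemma integrable_mass_iff (f : E3 → ℝ) :
    Integrable f (mass α β) ↔ Integrable (fun p => (pZ α β p)⁻¹ * f p) := by
  unfold mass
  rw [integrable_withDensity_iff_integrable_smul measurable_dens]
  refine integrable_congr (Filter.Eventually.of_forall fun p => ?_)
  simp [NNReal.smul_def, (pZ_pos (α := α) (β := β) p).le]

lemma integral_norm_mass_le {f : E3 → ℝ} (hf : Integrable f) :
    ∫ p, ‖f p‖ ∂(mass α β) ≤ ∫ p, ‖f p‖ :=
  integral_mono_measure mass_le_volume (Filter.Eventually.of_forall fun _ => norm_nonneg _) hf.norm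

lemma ae_of_ae_mass {P : E3 → Prop} (h : ∀ᵐ p ∂(mass α β), P p) : ∀ᵐ p, P p := by
  unfold mass at h
  rw [ae_withDensity_iff measurable_dens.coe_nnreal_ennreal] at h
  filter_upwards [h] with p hp
  exact hp (by simpa using pZ_pos p)

/-- The phase-space measure `dω dp̄ dq̄ / (p⁰q⁰)`. -/
noncomputable def phase (α β : ℝ) : Measure (Metric.sphere (0 : E3) 1 × (E3 × E3)) :=
  sphMeas.prod ((mass α β).prod (mass α β))

/-- The collision map `(ω, p̄, q̄) ↦ (ω, p̄′, q̄′)`. -/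
noncomputable def collMap (α β : ℝ) (z : Metric.sphere (0 : E3) 1 × (E3 × E3)) :
    Metric.sphere (0 : E3) 1 × (E3 × E3) :=
  (z.1, (pPr α β z.2.1 z.2.2 z.1, qPr α β z.2.1 z.2.2 z.1))

lemma measurable_coll_pair : Measurable fun z : Metric.sphere (0 : E3) 1 × (E3 × E3) =>
    (pPr α β z.2.1 z.2.2 z.1, qPr α β z.2.1 z.2.2 z.1) := by
  have h1 : Measurable fun z : Metric.sphere (0 : E3) 1 × (E3 × E3) => (z.1 : E3) :=
    measurable_subtype_coe.comp measurable_fst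
  exact (measurable_pPr (by fun_prop) (by fun_prop) h1).prodMk
    (measurable_qPr (by fun_prop) (by fun_prop) h1)

lemma measurePreserving_collMap (hα : 0 < α) (hβ : 0 < β) :
    MeasurePreserving (collMap α β) (phase α β) (phase α β) := by
  unfold phase collMap
  exact (MeasurePreserving.id sphMeas).skew_product
    (g := fun (ω : Metric.sphere (0 : E3) 1) (z : E3 × E3) => (pPr α β z.1 z.2 ω, qPr α β z.1 z.2 ω)) measurable_coll_pair
    (Filter.Eventually.of_forall fun ω => map_collision hα hβ ω)

/-- The integrand of the gain term. -/
noncomputable def gainKer (α β : ℝ) (S₀ : E3 → E3 → E3 → E3 → ℝ) (f g : E3 → ℝ)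
    (z : Metric.sphere (0 : E3) 1 × (E3 × E3)) : ℝ :=
  f (pPr α β z.2.1 z.2.2 z.1) * g (qPr α β z.2.1 z.2.2 z.1) *
    S₀ z.2.1 z.2.2 (pPr α β z.2.1 z.2.2 z.1) (qPr α β z.2.1 z.2.2 z.1)

lemma KernelHyp.measurable_kernel (H : KernelHyp α β C₁ S₀) :
    Measurable fun z : Metric.sphere (0 : E3) 1 × (E3 × E3) =>
      S₀ z.2.1 z.2.2 (pPr α β z.2.1 z.2.2 z.1) (qPr α β z.2.1 z.2.2 z.1) :=
  H.meas.comp (measurable_snd.prodMk measurable_coll_pair)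

lemma KernelHyp.norm_le (H : KernelHyp α β C₁ S₀) (p q p' q' : E3) : ‖S₀ p q p' q'‖ ≤ C₁ := by
  rw [norm_of_nonneg (H.nonneg _ _ _ _)]; exact H.bdd _ _ _ _

/-- The basic bound on the gain term: the collision map moves the primes away from `f` and `g`, and
`1 / (p⁰q⁰) ≤ 1`. -/
lemma gainKer_integrable (H : KernelHyp α β C₁ S₀) {f g : E3 → ℝ} (hf : Integrable f)
    (hg : Integrable g) : Integrable (gainKer α β S₀ f g) (phase α β) ∧
      ∫ z, ‖gainKer α β S₀ f g z‖ ∂(phase α β) ≤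
        4 * π * C₁ * ((∫ p, ‖f p‖) * ∫ p, ‖g p‖) := by
  have hf' := hf.mono_measure (mass_le_volume (α := α) (β := β))
  have hg' := hg.mono_measure (mass_le_volume (α := α) (β := β))
  have hfg : Integrable (fun z : Metric.sphere (0 : E3) 1 × (E3 × E3) => f z.2.1 * g z.2.2)
      (phase α β) := (hf'.mul_prod hg').comp_snd sphMeas
  have hT := measurePreserving_collMap H.hα H.hβ
  have hfgT := hT.integrable_comp_of_integrable hfg
  have hI : Integrable (gainKer α β S₀ f g) (phase α β) :=
    hfgT.mul_bdd H.measurable_kernel.aestronglyMeasurable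
      (Filter.Eventually.of_forall fun z => H.norm_le _ _ _ _)
  refine ⟨hI, ?_⟩
  have e1 : ∫ z, ‖((fun z : Metric.sphere (0 : E3) 1 × (E3 × E3) => f z.2.1 * g z.2.2) ∘
      collMap α β) z‖ ∂(phase α β) =
      ∫ z : Metric.sphere (0 : E3) 1 × (E3 × E3), ‖f z.2.1 * g z.2.2‖ ∂(phase α β) := by
    conv_rhs => rw [← hT.map_eq]
    rw [integral_map hT.measurable.aemeasurable (by rw [hT.map_eq]; exact hfg.norm.1)]
    rfl
  have e2 : ∫ z : Metric.sphere (0 : E3) 1 × (E3 × E3), ‖f z.2.1 * g z.2.2‖ ∂(phase α β) =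
      4 * π * ((∫ p, ‖f p‖ ∂(mass α β)) * ∫ p, ‖g p‖ ∂(mass α β)) := by
    unfold phase
    simp_rw [norm_mul]
    have := integral_prod_mul (μ := sphMeas) (ν := (mass α β).prod (mass α β))
      (fun _ => (1 : ℝ)) (fun z : E3 × E3 => ‖f z.1‖ * ‖g z.2‖)
    simp only [one_mul] at this
    rw [this, integral_prod_mul (fun p => ‖f p‖) (fun p => ‖g p‖)]
    simp [sphMeas_real_univ]
  calc ∫ z, ‖gainKer α β S₀ f g z‖ ∂(phase α β)
      ≤ ∫ z, ‖((fun z : Metric.sphere (0 : E3) 1 × (E3 × E3) => f z.2.1 * g z.2.2) ∘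
      collMap α β) z‖ * C₁ ∂(phase α β) := by
        refine integral_mono hI.norm (hfgT.norm.mul_const _) fun z => ?_
        simp only [gainKer, Function.comp, collMap]
        rw [norm_mul]
        exact mul_le_mul_of_nonneg_left (H.norm_le _ _ _ _) (norm_nonneg _)
    _ = 4 * π * C₁ * ((∫ p, ‖f p‖ ∂(mass α β)) * ∫ p, ‖g p‖ ∂(mass α β)) := by
        rw [integral_mul_const, e1, e2]; ring
    _ ≤ _ := by
        have hC := H.hC₁
        have := pi_pos
        exact mul_le_mul_of_nonneg_left (mul_le_mul (integral_norm_mass_le hf)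
          (integral_norm_mass_le hg) (integral_nonneg fun _ => norm_nonneg _)
          (integral_nonneg fun _ => norm_nonneg _)) (by positivity)

/-- Integration of a phase-space function over `ω` and `q̄`. -/
noncomputable def marg (α β : ℝ) (K : Metric.sphere (0 : E3) 1 × (E3 × E3) → ℝ) (p : E3) : ℝ :=
  ∫ q, ∫ ω, K (ω, (p, q)) ∂sphMeas ∂(mass α β)

lemma integral_norm_integral_le {X Y : Type*} [MeasurableSpace X] [MeasurableSpace Y]
    {μ : Measure X} {ν : Measure Y} [SFinite μ] [SFinite ν] {K : X × Y → ℝ}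
    (hK : Integrable K (μ.prod ν)) :
    ∫ x, ‖∫ y, K (x, y) ∂ν‖ ∂μ ≤ ∫ z, ‖K z‖ ∂(μ.prod ν) := by
  rw [integral_prod _ hK.norm]
  exact integral_mono hK.integral_prod_left.norm hK.norm.integral_prod_left
    fun x => norm_integral_le_integral_norm _

lemma marg_integrable {K : Metric.sphere (0 : E3) 1 × (E3 × E3) → ℝ}
    (hK : Integrable K (phase α β)) : Integrable (marg α β K) (mass α β) :=
  hK.swap.integral_prod_left.integral_prod_left

lemma marg_norm_le {K : Metric.sphere (0 : E3) 1 × (E3 × E3) → ℝ}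
    (hK : Integrable K (phase α β)) :
    ∫ p, ‖marg α β K p‖ ∂(mass α β) ≤ ∫ z, ‖K z‖ ∂(phase α β) := by
  refine (integral_norm_integral_le hK.swap.integral_prod_left).trans ?_
  refine (integral_norm_integral_le hK.swap).trans (le_of_eq ?_)
  exact integral_prod_swap (fun z => ‖K z‖)

lemma marg_sub {K L : Metric.sphere (0 : E3) 1 × (E3 × E3) → ℝ}
    (hK : Integrable K (phase α β)) (hL : Integrable L (phase α β)) :
    ∀ᵐ p ∂(mass α β), marg α β (fun z => K z - L z) p = marg α β K p - marg α β L p := by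
  have h1 : ∀ᵐ z ∂((mass α β).prod (mass α β)), ∫ ω, (K (ω, z) - L (ω, z)) ∂sphMeas =
      ∫ ω, K (ω, z) ∂sphMeas - ∫ ω, L (ω, z) ∂sphMeas := by
    filter_upwards [hK.swap.prod_right_ae, hL.swap.prod_right_ae] with z hz1 hz2
    exact integral_sub hz1 hz2
  filter_upwards [Measure.ae_ae_of_ae_prod h1, hK.swap.integral_prod_left.prod_right_ae,
    hL.swap.integral_prod_left.prod_right_ae] with p hp h2 h3
  unfold marg
  rw [integral_congr_ae hp]
  exact integral_sub h2 h3

lemma Qplus_eq (f g : E3 → ℝ) (p : E3) :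
    Qplus α β S₀ f g p = α * β ^ 2 * marg α β (gainKer α β S₀ f g) p := by
  unfold Qplus marg
  rw [integral_mass]
  rfl

/-- The weighted gain term `Q⁺(f,f)/p⁰`. -/
noncomputable def gain (α β : ℝ) (S₀ : E3 → E3 → E3 → E3 → ℝ) (f : E3 → ℝ) (p : E3) : ℝ :=
  (pZ α β p)⁻¹ * Qplus α β S₀ f f p

lemma integrable_gain (H : KernelHyp α β C₁ S₀) {f : E3 → ℝ} (hf : Integrable f) :
    Integrable (gain α β S₀ f) := by
  refine (integrable_mass_iff (α := α) (β := β) (fun p => Qplus α β S₀ f f p)).mp ?_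
  simp only [Qplus_eq]
  exact (marg_integrable (gainKer_integrable H hf hf).1).const_mul _

/-- The gain term is a bounded quadratic map on `L¹`: its difference splits as
`Q⁺(f, f - g) + Q⁺(f - g, g)`. -/
lemma gain_sub_le (H : KernelHyp α β C₁ S₀) {f g : E3 → ℝ} (hf : Integrable f)
    (hg : Integrable g) : ∫ p, ‖gain α β S₀ f p - gain α β S₀ g p‖ ≤
      4 * π * C₁ * α * β ^ 2 * (((∫ p, ‖f p‖) + ∫ p, ‖g p‖) * ∫ p, ‖f p - g p‖) := by
  have hα := H.hα
  have hβ := H.hβ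
  have hd : Integrable (fun p => f p - g p) := hf.sub hg
  obtain ⟨hF, -⟩ := gainKer_integrable H hf hf
  obtain ⟨hG, -⟩ := gainKer_integrable H hg hg
  obtain ⟨hA, bA⟩ := gainKer_integrable H hf hd
  obtain ⟨hB, bB⟩ := gainKer_integrable H hd hg
  have hFG : Integrable (fun z => gainKer α β S₀ f f z - gainKer α β S₀ g g z) (phase α β) :=
    hF.sub hG
  calc ∫ p, ‖gain α β S₀ f p - gain α β S₀ g p‖
      = ∫ p, (pZ α β p)⁻¹ * ‖Qplus α β S₀ f f p - Qplus α β S₀ g g p‖ := by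
        refine integral_congr_ae (Filter.Eventually.of_forall fun p => ?_)
        simp only [gain]
        rw [← mul_sub, norm_mul, norm_of_nonneg (inv_nonneg.mpr (pZ_pos p).le)]
    _ = ∫ p, ‖Qplus α β S₀ f f p - Qplus α β S₀ g g p‖ ∂(mass α β) := (integral_mass _).symm
    _ = ∫ p, α * β ^ 2 *
          ‖marg α β (fun z => gainKer α β S₀ f f z - gainKer α β S₀ g g z) p‖ ∂(mass α β) := by
        refine integral_congr_ae ?_
        filter_upwards [marg_sub hF hG] with p hp
        rw [hp, Qplus_eq, Qplus_eq, ← mul_sub, norm_mul, norm_of_nonneg (by positivity)]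
    _ ≤ α * β ^ 2 *
          ∫ z, ‖gainKer α β S₀ f f z - gainKer α β S₀ g g z‖ ∂(phase α β) := by
        rw [integral_const_mul]
        gcongr
        exact marg_norm_le hFG
    _ ≤ α * β ^ 2 * ∫ z, (‖gainKer α β S₀ f (fun p => f p - g p) z‖ +
          ‖gainKer α β S₀ (fun p => f p - g p) g z‖) ∂(phase α β) := by
        refine mul_le_mul_of_nonneg_left ?_ (by positivity)
        refine integral_mono hFG.norm (hA.norm.add hB.norm) fun z => ?_
        have e : gainKer α β S₀ f f z - gainKer α β S₀ g g z =
            gainKer α β S₀ f (fun p => f p - g p) z + gainKer α β S₀ (fun p => f p - g p) g z := by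
          simp only [gainKer]; ring
        change ‖gainKer α β S₀ f f z - gainKer α β S₀ g g z‖ ≤ _
        rw [e]
        exact norm_add_le _ _
    _ ≤ α * β ^ 2 * (4 * π * C₁ * ((∫ p, ‖f p‖) * ∫ p, ‖f p - g p‖) +
          4 * π * C₁ * ((∫ p, ‖f p - g p‖) * ∫ p, ‖g p‖)) := by
        rw [integral_add hA.norm hB.norm]
        gcongr
    _ = _ := by ring

lemma gain_norm_le (H : KernelHyp α β C₁ S₀) {f : E3 → ℝ} (hf : Integrable f) :
    ∫ p, ‖gain α β S₀ f p‖ ≤ 4 * π * C₁ * α * β ^ 2 * ((∫ p, ‖f p‖) * ∫ p, ‖f p‖) := by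
  have h := gain_sub_le H hf (integrable_zero E3 ℝ volume)
  have h0 : ∀ p, gain α β S₀ 0 p = 0 := fun p => by simp [gain, Qplus]
  simpa [h0] using h

lemma gain_nonneg (H : KernelHyp α β C₁ S₀) {f : E3 → ℝ} (hf : Integrable f)
    (h0 : 0 ≤ᵐ[volume] f) : ∀ᵐ p, 0 ≤ gain α β S₀ f p := by
  have hpos : Integrable fun p => max (f p) 0 := hf.pos_part
  -- `gain` does not distinguish `f` from its positive part, on which the integrand is nonnegative.
  have hz : ∫ p, ‖f p - max (f p) 0‖ = 0 := by
    refine integral_eq_zero_of_ae ?_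
    filter_upwards [h0] with p hp
    have hp' : 0 ≤ f p := hp
    simp [hp']
  have h := gain_sub_le H hf hpos
  rw [hz, mul_zero, mul_zero] at h
  have h1 := le_antisymm h (integral_nonneg fun _ => norm_nonneg _)
  have h1 := (integral_eq_zero_iff_of_nonneg (fun _ => norm_nonneg _)
    ((integrable_gain H hf).sub (integrable_gain H hpos)).norm).mp h1
  filter_upwards [h1] with p hp
  have e : gain α β S₀ f p = gain α β S₀ (fun p => max (f p) 0) p := by
    simpa [sub_eq_zero] using hp
  rw [e]
  have hα := H.hα
  unfold gain Qplus
  have hi : ∀ q, 0 ≤ (pZ α β q)⁻¹ := fun q => inv_nonneg.mpr (pZ_pos q).le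
  refine mul_nonneg (hi p) (mul_nonneg (by positivity) (integral_nonneg fun q =>
    mul_nonneg (hi q) (integral_nonneg fun ω => mul_nonneg (mul_nonneg ?_ ?_) (H.nonneg _ _ _ _))))
  · exact le_max_right _ _
  · exact le_max_right _ _

/-- The collision frequency: `Q⁻(f,g) = f · rate g`. -/
noncomputable def rate (α β : ℝ) (S₀ : E3 → E3 → E3 → E3 → ℝ) (g : E3 → ℝ) (p : E3) : ℝ :=
  α * β ^ 2 * ∫ q, g q *
    ((pZ α β q)⁻¹ * ∫ ω : Metric.sphere (0 : E3) 1,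
      S₀ p q (pPr α β p q ω) (qPr α β p q ω) ∂sphMeas)

lemma Qminus_eq (f g : E3 → ℝ) (p : E3) :
    Qminus α β S₀ f g p = f p * rate α β S₀ g p := by
  unfold Qminus rate
  simp_rw [integral_const_mul]
  rw [mul_left_comm, ← integral_const_mul (f p)]
  congr 2
  funext q
  ring

lemma rate_weight_measurable (H : KernelHyp α β C₁ S₀) :
    Measurable fun z : E3 × E3 => (pZ α β z.2)⁻¹ * ∫ ω : Metric.sphere (0 : E3) 1,
      S₀ z.1 z.2 (pPr α β z.1 z.2 ω) (qPr α β z.1 z.2 ω) ∂sphMeas := by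
  refine (measurable_pZ measurable_snd).inv.mul ?_
  exact ((H.measurable_kernel.comp measurable_swap).stronglyMeasurable.integral_prod_right'
    (ν := sphMeas)).measurable

lemma rate_weight_bound (H : KernelHyp α β C₁ S₀) (p q : E3) :
    ‖(pZ α β q)⁻¹ * ∫ ω : Metric.sphere (0 : E3) 1,
      S₀ p q (pPr α β p q ω) (qPr α β p q ω) ∂sphMeas‖ ≤ 4 * π * C₁ := by
  rw [norm_mul, norm_of_nonneg (inv_nonneg.mpr (pZ_pos q).le)]
  have h := norm_integral_le_of_norm_le_const (μ := sphMeas)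
    (Filter.Eventually.of_forall fun ω : Metric.sphere (0 : E3) 1 =>
      H.norm_le p q (pPr α β p q ω) (qPr α β p q ω))
  rw [sphMeas_real_univ] at h
  calc _ ≤ 1 * (C₁ * (4 * π)) := mul_le_mul (pZ_inv_le_one q) h (norm_nonneg _) zero_le_one
    _ = _ := by ring

lemma rate_integrand_integrable (H : KernelHyp α β C₁ S₀) {g : E3 → ℝ} (hg : Integrable g)
    (p : E3) : Integrable fun q => g q *
    ((pZ α β q)⁻¹ * ∫ ω : Metric.sphere (0 : E3) 1,
      S₀ p q (pPr α β p q ω) (qPr α β p q ω) ∂sphMeas) :=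
  hg.mul_bdd ((rate_weight_measurable H).comp measurable_prodMk_left).aestronglyMeasurable
    (Filter.Eventually.of_forall fun q => rate_weight_bound H p q)

lemma rate_norm_le (H : KernelHyp α β C₁ S₀) {g : E3 → ℝ} (hg : Integrable g) (p : E3) :
    ‖rate α β S₀ g p‖ ≤ 4 * π * C₁ * α * β ^ 2 * ∫ q, ‖g q‖ := by
  have hα := H.hα
  unfold rate
  rw [norm_mul, norm_of_nonneg (by positivity)]
  have : ‖∫ q, g q * ((pZ α β q)⁻¹ * ∫ ω : Metric.sphere (0 : E3) 1,
      S₀ p q (pPr α β p q ω) (qPr α β p q ω) ∂sphMeas)‖ ≤ ∫ q, ‖g q‖ * (4 * π * C₁) := by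
    refine norm_integral_le_of_norm_le (hg.norm.mul_const _)
      (Filter.Eventually.of_forall fun q => ?_)
    rw [norm_mul]
    exact mul_le_mul_of_nonneg_left (rate_weight_bound H p q) (norm_nonneg _)
  rw [integral_mul_const] at this
  calc _ ≤ α * β ^ 2 * ((∫ q, ‖g q‖) * (4 * π * C₁)) := by gcongr
    _ = _ := by ring

lemma rate_sub (H : KernelHyp α β C₁ S₀) {f g : E3 → ℝ} (hf : Integrable f) (hg : Integrable g)
    (p : E3) : rate α β S₀ f p - rate α β S₀ g p = rate α β S₀ (fun q => f q - g q) p := by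
  unfold rate
  rw [← mul_sub, ← integral_sub (rate_integrand_integrable H hf p)
    (rate_integrand_integrable H hg p)]
  simp_rw [sub_mul]

lemma rate_nonneg (H : KernelHyp α β C₁ S₀) {g : E3 → ℝ} (h0 : 0 ≤ᵐ[volume] g) (p : E3) :
    0 ≤ rate α β S₀ g p := by
  have hα := H.hα
  unfold rate
  refine mul_nonneg (by positivity) (integral_nonneg_of_ae ?_)
  filter_upwards [h0] with q hq
  exact mul_nonneg hq (mul_nonneg (inv_nonneg.mpr (pZ_pos q).le)
    (integral_nonneg fun ω => H.nonneg _ _ _ _))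

lemma rate_aestronglyMeasurable (H : KernelHyp α β C₁ S₀) {g : E3 → ℝ} (hg : Integrable g) :
    AEStronglyMeasurable (rate α β S₀ g) := by
  unfold rate
  refine AEStronglyMeasurable.const_mul ?_ _
  exact (hg.1.comp_snd.mul (rate_weight_measurable H).aestronglyMeasurable).integral_prod_right'

end Estimates

/-! ### The fixed-point map -/

section FixedPoint

variable {α β C₁ : ℝ} {S₀ : E3 → E3 → E3 → E3 → ℝ}

/-- The denominator `k + rate u / p⁰` of the fixed-point map. -/
noncomputable def den (α β : ℝ) (S₀ : E3 → E3 → E3 → E3 → ℝ) (k : ℝ) (u : E3 → ℝ) (p : E3) : ℝ :=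
  k + (pZ α β p)⁻¹ * rate α β S₀ u p

/-- The fixed-point map `u ↦ (v + Q⁺(u,u)/p⁰) / (k + rate u / p⁰)`. -/
noncomputable def phi (α β : ℝ) (S₀ : E3 → E3 → E3 → E3 → ℝ) (k : ℝ) (v u : E3 → ℝ) (p : E3) : ℝ :=
  (v p + gain α β S₀ u p) * (den α β S₀ k u p)⁻¹

lemma le_den (H : KernelHyp α β C₁ S₀) (k : ℝ) {u : E3 → ℝ} (h0 : 0 ≤ᵐ[volume] u) (p : E3) :
    k ≤ den α β S₀ k u p :=
  le_add_of_nonneg_right (mul_nonneg (inv_nonneg.mpr (pZ_pos p).le) (rate_nonneg H h0 p))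

lemma norm_den_inv_le (H : KernelHyp α β C₁ S₀) {k : ℝ} (hk : 0 < k) {u : E3 → ℝ}
    (h0 : 0 ≤ᵐ[volume] u) (p : E3) : ‖(den α β S₀ k u p)⁻¹‖ ≤ k⁻¹ := by
  have h := le_den H k h0 p
  rw [norm_inv, norm_of_nonneg (hk.le.trans h)]
  exact inv_anti₀ hk h

lemma den_sub_le (H : KernelHyp α β C₁ S₀) (k : ℝ) {f g : E3 → ℝ} (hf : Integrable f)
    (hg : Integrable g) (p : E3) : ‖den α β S₀ k g p - den α β S₀ k f p‖ ≤
      4 * π * C₁ * α * β ^ 2 * ∫ q, ‖f q - g q‖ := by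
  have e : den α β S₀ k g p - den α β S₀ k f p
      = -((pZ α β p)⁻¹ * rate α β S₀ (fun q => f q - g q) p) := by
    rw [← rate_sub H hf hg]; unfold den; ring
  rw [e, norm_neg, norm_mul, norm_of_nonneg (inv_nonneg.mpr (pZ_pos p).le)]
  calc _ ≤ 1 * (4 * π * C₁ * α * β ^ 2 * ∫ q, ‖f q - g q‖) :=
        mul_le_mul (pZ_inv_le_one p) (rate_norm_le H (hf.sub hg) p) (norm_nonneg _) zero_le_one
    _ = _ := one_mul _

lemma phi_integrable (H : KernelHyp α β C₁ S₀) {k : ℝ} (hk : 0 < k) {v u : E3 → ℝ}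
    (hv : Integrable v) (hu : Integrable u) (h0 : 0 ≤ᵐ[volume] u) :
    Integrable (phi α β S₀ k v u) := by
  refine (hv.add (integrable_gain H hu)).mul_bdd (c := k⁻¹) ?_
    (Filter.Eventually.of_forall fun p => norm_den_inv_le H hk h0 p)
  refine AEMeasurable.aestronglyMeasurable (AEMeasurable.inv ?_)
  unfold den
  exact ((measurable_pZ measurable_id).inv.aemeasurable.mul
    (rate_aestronglyMeasurable H hu).aemeasurable).const_add k

lemma phi_nonneg (H : KernelHyp α β C₁ S₀) {k : ℝ} (hk : 0 < k) {v u : E3 → ℝ}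
    (hv0 : 0 ≤ᵐ[volume] v) (hu : Integrable u) (h0 : 0 ≤ᵐ[volume] u) :
    0 ≤ᵐ[volume] phi α β S₀ k v u := by
  filter_upwards [hv0, gain_nonneg H hu h0] with p hp hq
  exact mul_nonneg (add_nonneg hp hq) (inv_nonneg.mpr (hk.le.trans (le_den H k h0 p)))

lemma num_norm_le (H : KernelHyp α β C₁ S₀) {v u : E3 → ℝ} (hv : Integrable v)
    (hu : Integrable u) : ∫ p, ‖v p + gain α β S₀ u p‖ ≤
      (∫ p, ‖v p‖) + 4 * π * C₁ * α * β ^ 2 * ((∫ p, ‖u p‖) * ∫ p, ‖u p‖) := by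
  have hg := integrable_gain H hu
  calc _ ≤ ∫ p, (‖v p‖ + ‖gain α β S₀ u p‖) :=
        integral_mono (hv.add hg).norm (hv.norm.add hg.norm) fun p => norm_add_le _ _
    _ = (∫ p, ‖v p‖) + ∫ p, ‖gain α β S₀ u p‖ := integral_add hv.norm hg.norm
    _ ≤ _ := by gcongr; exact gain_norm_le H hu

lemma phi_norm_le (H : KernelHyp α β C₁ S₀) {k : ℝ} (hk : 0 < k) {v u : E3 → ℝ}
    (hv : Integrable v) (hu : Integrable u) (h0 : 0 ≤ᵐ[volume] u) :
    ∫ p, ‖phi α β S₀ k v u p‖ ≤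
      ((∫ p, ‖v p‖) + 4 * π * C₁ * α * β ^ 2 * ((∫ p, ‖u p‖) * ∫ p, ‖u p‖)) * k⁻¹ := by
  have hn : Integrable fun p => v p + gain α β S₀ u p := hv.add (integrable_gain H hu)
  calc _ ≤ ∫ p, ‖v p + gain α β S₀ u p‖ * k⁻¹ := by
        refine integral_mono (phi_integrable H hk hv hu h0).norm (hn.norm.mul_const _) fun p => ?_
        simp only [phi]
        rw [norm_mul]
        exact mul_le_mul_of_nonneg_left (norm_den_inv_le H hk h0 p) (norm_nonneg _)
    _ = (∫ p, ‖v p + gain α β S₀ u p‖) * k⁻¹ := integral_mul_const _ _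
    _ ≤ _ := by
        gcongr
        exact num_norm_le H hv hu

/-- The contraction estimate, from
`N₁/D₁ - N₂/D₂ = (N₁ - N₂)/D₁ + N₂ (D₂ - D₁)/(D₁ D₂)`. -/
lemma phi_sub_le (H : KernelHyp α β C₁ S₀) {k : ℝ} (hk : 0 < k) {v f g : E3 → ℝ}
    (hv : Integrable v) (hf : Integrable f) (hg : Integrable g) (hf0 : 0 ≤ᵐ[volume] f)
    (hg0 : 0 ≤ᵐ[volume] g) :
    ∫ p, ‖phi α β S₀ k v f p - phi α β S₀ k v g p‖ ≤
      4 * π * C₁ * α * β ^ 2 * (((∫ p, ‖f p‖) + ∫ p, ‖g p‖) * ∫ p, ‖f p - g p‖) * k⁻¹ +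
      ((∫ p, ‖v p‖) + 4 * π * C₁ * α * β ^ 2 * ((∫ p, ‖g p‖) * ∫ p, ‖g p‖)) *
        (4 * π * C₁ * α * β ^ 2 * (∫ q, ‖f q - g q‖) * (k⁻¹ * k⁻¹)) := by
  have hC := H.hC₁
  have hα := H.hα
  have hpi := pi_pos
  set D := 4 * π * C₁ * α * β ^ 2 * ∫ q, ‖f q - g q‖ with hD
  have hD0 : 0 ≤ D := mul_nonneg (by positivity) (integral_nonneg fun _ => norm_nonneg _)
  have hn : Integrable fun p => v p + gain α β S₀ g p := hv.add (integrable_gain H hg)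
  have hd : Integrable fun p => gain α β S₀ f p - gain α β S₀ g p :=
    (integrable_gain H hf).sub (integrable_gain H hg)
  calc _ ≤ ∫ p, (‖gain α β S₀ f p - gain α β S₀ g p‖ * k⁻¹ +
          ‖v p + gain α β S₀ g p‖ * (D * (k⁻¹ * k⁻¹))) := by
        refine integral_mono
          ((phi_integrable H hk hv hf hf0).sub (phi_integrable H hk hv hg hg0)).norm
          ((hd.norm.mul_const _).add (hn.norm.mul_const _)) fun p => ?_
        have d1 : den α β S₀ k f p ≠ 0 := (hk.trans_le (le_den H k hf0 p)).ne'
        have d2 : den α β S₀ k g p ≠ 0 := (hk.trans_le (le_den H k hg0 p)).ne'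
        have e : phi α β S₀ k v f p - phi α β S₀ k v g p =
            (gain α β S₀ f p - gain α β S₀ g p) * (den α β S₀ k f p)⁻¹ +
            (v p + gain α β S₀ g p) * ((den α β S₀ k g p - den α β S₀ k f p) *
              ((den α β S₀ k f p)⁻¹ * (den α β S₀ k g p)⁻¹)) := by
          unfold phi
          field_simp
          ring
        change ‖phi α β S₀ k v f p - phi α β S₀ k v g p‖ ≤ _
        rw [e]
        refine (norm_add_le _ _).trans (add_le_add ?_ ?_)
        · rw [norm_mul]
          exact mul_le_mul_of_nonneg_left (norm_den_inv_le H hk hf0 p) (norm_nonneg _)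
        · rw [norm_mul, norm_mul, norm_mul]
          refine mul_le_mul_of_nonneg_left ?_ (norm_nonneg _)
          exact mul_le_mul (den_sub_le H k hf hg p)
            (mul_le_mul (norm_den_inv_le H hk hf0 p) (norm_den_inv_le H hk hg0 p)
              (norm_nonneg _) (by positivity)) (by positivity) hD0
    _ = (∫ p, ‖gain α β S₀ f p - gain α β S₀ g p‖) * k⁻¹ +
          (∫ p, ‖v p + gain α β S₀ g p‖) * (D * (k⁻¹ * k⁻¹)) := by
        rw [integral_add (hd.norm.mul_const _) (hn.norm.mul_const _), integral_mul_const,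
          integral_mul_const]
    _ ≤ _ := by
        gcongr
        · exact gain_sub_le H hf hg
        · exact num_norm_le H hv hg

/-- Fixed points of `phi` are the solutions of the equation, because `Q⁻(u,u) = u · rate u` can be
moved to the left-hand side and the denominator does not vanish. -/
lemma phi_eq_iff (H : KernelHyp α β C₁ S₀) {k : ℝ} (hk : 0 < k) {v u : E3 → ℝ}
    (h0 : 0 ≤ᵐ[volume] u) (p : E3) :
    k * u p - (pZ α β p)⁻¹ * Qcoll α β S₀ u u p = v p ↔ phi α β S₀ k v u p = u p := by
  have hd : den α β S₀ k u p ≠ 0 := (hk.trans_le (le_den H k h0 p)).ne'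
  unfold phi
  rw [← div_eq_mul_inv, div_eq_iff hd, Qcoll, Qminus_eq, gain, den]
  constructor <;> intro h <;> linarith

lemma isClosed_memX (r : ℝ) : IsClosed {u : L1 | memX r u} := by
  have e : {u : L1 | memX r u} = Set.Ici 0 ∩ {u : L1 | ‖u‖ ≤ r} := by
    ext u
    simp only [memX, Set.mem_ofPred_eq, Set.mem_inter_iff, Set.mem_Ici, Lp.coeFn_nonneg]
  rw [e]
  exact isClosed_Ici.inter (isClosed_le continuous_norm continuous_const)

lemma L1_norm_eq (u : L1) : ‖u‖ = ∫ p, ‖u p‖ := L1.norm_eq_integral_norm u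

lemma L1_norm_sub_eq (u w : L1) : ‖u - w‖ = ∫ p, ‖u p - w p‖ := by
  rw [L1_norm_eq]
  refine integral_congr_ae ?_
  filter_upwards [Lp.coeFn_sub u w] with p hp
  rw [hp]; rfl

end FixedPoint

theorem statement_6
    (C₀ C₁ α β : ℝ) (hC₀ : 0 < C₀) (hC₁ : 0 < C₁) (hα : C₀ ≤ α) (hβ : C₀ ≤ β)
    (S₀ : E3 → E3 → E3 → E3 → ℝ)
    (hS₀meas : Measurable fun x : (E3 × E3) × E3 × E3 => S₀ x.1.1 x.1.2 x.2.1 x.2.2)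
    (hS₀nonneg : ∀ p q p' q', 0 ≤ S₀ p q p' q')
    (hS₀bdd : ∀ p q p' q', S₀ p q p' q' ≤ C₁)
    (hS₀symm : ∀ p q p' q', S₀ p q p' q' = S₀ p' q' p q)
    (r : ℝ) (hr : 0 < r) (n : ℕ) (hn : 1 ≤ n)
    (hn1 : (1 + 4 * Real.pi * C₁ * α * β ^ 2 * r) / Real.sqrt n ≤ 1)
    (hn2 : 3 * (4 * Real.pi * C₁ * α * β ^ 2) * r * (1 + 4 * Real.pi * C₁ * α * β ^ 2 * r) / Real.sqrt n ≤ 1 / 2)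
    (v : L1) (hv : memX r v) :
    ∃! u : L1, memX r u ∧
      (fun p : E3 => Real.sqrt n * u p - (pZ α β p)⁻¹ * Qcoll α β S₀ (⇑u) (⇑u) p)
        =ᵐ[volume] ⇑v := by
  have H : KernelHyp α β C₁ S₀ :=
    ⟨hC₀.trans_le hα, hC₀.trans_le hβ, hC₁, hS₀meas, hS₀nonneg, hS₀bdd⟩
  have hα0 := H.hα
  have hβ0 := H.hβ
  have hk : 0 < √(n : ℝ) := sqrt_pos.mpr (by exact_mod_cast hn)
  set k := √(n : ℝ) with hkdef
  have hLp : ∀ u : L1, Integrable u := fun u => L1.integrable_coeFn u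
  have hI : ∀ u : {u : L1 // memX r u}, Integrable (phi α β S₀ k v u.1) :=
    fun u => phi_integrable H hk (hLp v) (hLp u.1) u.2.1
  set C := 4 * π * C₁ * α * β ^ 2 with hC
  have hCpos : 0 < C := by positivity
  rw [div_le_iff₀ hk] at hn1 hn2
  have hvr : ∫ p, ‖v p‖ ≤ r := by rw [← L1_norm_eq]; exact hv.2
  have hnum : ∀ u : L1, memX r u →
      (∫ p, ‖v p‖) + C * ((∫ p, ‖u p‖) * ∫ p, ‖u p‖) ≤ r * (1 + C * r) := by
    intro u hu
    have hur := hu.2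
    have h0 := norm_nonneg u
    rw [← L1_norm_eq u]
    calc _ ≤ r + C * (r * r) := by gcongr
      _ = _ := by ring
  have hcoe : ∀ u, (hI u).toL1 _ =ᵐ[volume] phi α β S₀ k v u.1 := fun u => (hI u).coeFn_toL1
  have hmem : ∀ u, memX r ((hI u).toL1 _) := by
    intro u
    constructor
    · filter_upwards [hcoe u, phi_nonneg H hk hv.1 (hLp u.1) u.2.1] with p hp h0
      rw [hp]; exact h0
    · rw [L1_norm_eq, integral_congr_ae (g := fun p => ‖phi α β S₀ k v u.1 p‖)
        (by filter_upwards [hcoe u] with p hp; rw [hp])]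
      refine (phi_norm_le H hk (hLp v) (hLp u.1) u.2.1).trans ?_
      rw [← div_eq_mul_inv, div_le_iff₀ hk]
      exact (hnum u.1 u.2).trans (mul_le_mul_of_nonneg_left (by linarith) hr.le)
  let Φ : {u : L1 // memX r u} → {u : L1 // memX r u} := fun u => ⟨(hI u).toL1 _, hmem u⟩
  have hcontr : ContractingWith (1 / 2) Φ := by
    refine ⟨by norm_num, LipschitzWith.of_dist_le_mul fun u w => ?_⟩
    rw [Subtype.dist_eq, Subtype.dist_eq, dist_eq_norm, dist_eq_norm]
    change ‖(hI u).toL1 _ - (hI w).toL1 _‖ ≤ _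
    rw [L1_norm_sub_eq, integral_congr_ae
      (g := fun p => ‖phi α β S₀ k v u.1 p - phi α β S₀ k v w.1 p‖)
      (by filter_upwards [hcoe u, hcoe w] with p hp hq; rw [hp, hq])]
    refine (phi_sub_le H hk (hLp v) (hLp u.1) (hLp w.1) u.2.1 w.2.1).trans ?_
    have hN := hnum w.1 w.2
    rw [← hC, ← L1_norm_sub_eq u.1 w.1, ← L1_norm_eq u.1]
    set d := ‖u.1 - w.1‖
    have hd : 0 ≤ d := norm_nonneg _
    have hu := u.2.2
    have hw : ∫ p, ‖w.1 p‖ ≤ r := by rw [← L1_norm_eq]; exact w.2.2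
    have hki : 0 < k⁻¹ := inv_pos.mpr hk
    calc _ ≤ C * ((r + r) * d) * k⁻¹ + r * (1 + C * r) * (C * d * (k⁻¹ * k⁻¹)) := by gcongr
      _ ≤ C * ((r + r) * d) * k⁻¹ + r * (1 * k) * (C * d * (k⁻¹ * k⁻¹)) := by
          gcongr
      _ = 3 * C * r * d * k⁻¹ := by field_simp; ring
      _ ≤ 3 * C * r * (1 + C * r) * d * k⁻¹ := by
          have : 1 ≤ 1 + C * r := le_add_of_nonneg_right (by positivity)
          have h3 : 0 ≤ 3 * C * r := by positivity
          exact mul_le_mul_of_nonneg_right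
            (mul_le_mul_of_nonneg_right (le_mul_of_one_le_right h3 this) hd) hki.le
      _ ≤ 1 / 2 * k * d * k⁻¹ := by gcongr
      _ = _ := by push_cast; field_simp
  have hfix : ∀ u : {u : L1 // memX r u}, Φ u = u ↔
      (fun p : E3 => k * u.1 p - (pZ α β p)⁻¹ * Qcoll α β S₀ (⇑u.1) (⇑u.1) p) =ᵐ[volume] ⇑v := by
    intro u
    rw [Subtype.ext_iff, Lp.ext_iff]
    change (hI u).toL1 _ =ᵐ[volume] _ ↔ _
    constructor
    · intro h
      filter_upwards [h, hcoe u] with p hp hq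
      exact (phi_eq_iff H hk u.2.1 p).mpr (by rw [← hq, hp])
    · intro h
      filter_upwards [h, hcoe u] with p hp hq
      rw [hq]
      exact (phi_eq_iff H hk u.2.1 p).mp hp
  have : CompleteSpace {u : L1 // memX r u} := (isClosed_memX r).completeSpace_coe
  have : Nonempty {u : L1 // memX r u} := ⟨⟨v, hv⟩⟩
  refine ⟨(ContractingWith.fixedPoint Φ hcontr).1, ⟨(ContractingWith.fixedPoint Φ hcontr).2,
    (hfix _).mp hcontr.fixedPoint_isFixedPt⟩, ?_⟩
  rintro u ⟨hu, he⟩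
  exact congrArg Subtype.val (hcontr.fixedPoint_unique (x := ⟨u, hu⟩) ((hfix ⟨u, hu⟩).mpr he))
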